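/- For every ε > 0 there exists K > 0 such that for all k ∈ ℂ with |k| ≥ K and all x ∈ [0,ℓ] one has |s'(x,k) − cos(kx) − (sin(kx)/k)·(1/2)∫₀ˣ q(t) dt + (cos(kx)/k²)·[ (1/4)(q(x) − q(0)) + (1/8)(∫₀ˣ q(t) dt)² ]| ≤ ε · e^{|Im k| x} / |k|². -/

import Mathlib

open MeasureTheory intervalIntegral Real

/-!
Iterate the Volterra equation. In each iterate the products of trigonometric functions of `k(x - t)`
and `kt` split into a factor depending only on `kx`, which yields a term of the expansion, and a
factor of phase `k(2t - x)`, which yields an oscillatory integral. By the Riemann-Lebesgue lemma the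
oscillatory integrals are `o(e^{|Im k| x})` uniformly in `x`. The one in the leading iterate of `s'`
carries only one factor `1/k`; one integration by parts against `q' ∈ L¹` gains the second, at the
cost of the boundary term `q(x) - q(0)`. The growth factor is harmless because
`e^{|Im k| (x - t)} e^{|Im k| t} = e^{|Im k| x}`, so that a Volterra convolution multiplies the
weights `e^{|Im k| x} / |k|ⁿ` of its kernel and its argument.
-/

open Set Filter Asymptotics Topology
open scoped ContDiff

section IsPrimitiveOn

variable {E : Type*} [NormedAddCommGroup E] [NormedSpace ℝ E] {F f : ℝ → E} {a b : ℝ}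

/-- `F` is absolutely continuous on the interval with endpoints `a` and `b` and has derivative
`f ∈ L¹` there, encoded by the fundamental theorem of calculus based at `a`. This is membership of
`F` in the Sobolev space `W^{1,1}`, together with its derivative. -/
structure IsPrimitiveOn (F f : ℝ → E) (a b : ℝ) : Prop where
  intervalIntegrable : IntervalIntegrable f volume a b
  eq_add_integral : ∀ x ∈ uIcc a b, F x = F a + ∫ t in a..x, f t

theorem isPrimitiveOn_integral (hf : IntervalIntegrable f volume a b) :
    IsPrimitiveOn (fun x ↦ ∫ t in a..x, f t) f a b :=
  ⟨hf, fun _ _ ↦ by rw [integral_same, zero_add]⟩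

theorem absolutelyContinuousOnInterval_of_dist_le {X Y : Type*} [PseudoMetricSpace X]
    [PseudoMetricSpace Y] {g : ℝ → X} {h : ℝ → Y} (hh : AbsolutelyContinuousOnInterval h a b)
    (hgh : ∀ x ∈ uIcc a b, ∀ y ∈ uIcc a b, dist (g x) (g y) ≤ dist (h x) (h y)) :
    AbsolutelyContinuousOnInterval g a b := by
  refine squeeze_zero' (.of_forall fun _ ↦ Finset.sum_nonneg fun _ _ ↦ dist_nonneg) ?_ hh
  filter_upwards [mem_inf_of_right (mem_principal_self _)] with I hI
  exact Finset.sum_le_sum fun i hi ↦ hgh _ (hI.1 i hi).1 _ (hI.1 i hi).2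

namespace IsPrimitiveOn

theorem sub_eq_integral (h : IsPrimitiveOn F f a b) {x y : ℝ} (hx : x ∈ uIcc a b)
    (hy : y ∈ uIcc a b) : F y - F x = ∫ t in x..y, f t := by
  have hint {z : ℝ} (hz : z ∈ uIcc a b) : IntervalIntegrable f volume a z :=
    h.intervalIntegrable.mono_set (uIcc_subset_uIcc_left hz)
  rw [h.eq_add_integral x hx, h.eq_add_integral y hy, add_sub_add_left_eq_sub,
    integral_interval_sub_left (hint hy) (hint hx)]

theorem mono (h : IsPrimitiveOn F f a b) {c : ℝ} (hc : c ∈ uIcc a b) : IsPrimitiveOn F f a c where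
  intervalIntegrable := h.intervalIntegrable.mono_set (uIcc_subset_uIcc_left hc)
  eq_add_integral x hx := h.eq_add_integral x (uIcc_subset_uIcc_left hc hx)

theorem absolutelyContinuousOnInterval (h : IsPrimitiveOn F f a b) :
    AbsolutelyContinuousOnInterval F a b := by
  have hnorm := isPrimitiveOn_integral h.intervalIntegrable.norm
  refine absolutelyContinuousOnInterval_of_dist_le
    (hnorm.intervalIntegrable.absolutelyContinuousOnInterval_intervalIntegral left_mem_uIcc)
    fun x hx y hy ↦ ?_
  rw [dist_eq_norm, dist_eq_norm, h.sub_eq_integral hy hx, hnorm.sub_eq_integral hy hx]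
  exact norm_integral_le_abs_integral_norm

theorem continuousOn (h : IsPrimitiveOn F f a b) : ContinuousOn F (uIcc a b) :=
  h.absolutelyContinuousOnInterval.continuousOn

theorem integral_eq_sub (h : IsPrimitiveOn F f a b) : ∫ t in a..b, f t = F b - F a :=
  (h.sub_eq_integral left_mem_uIcc right_mem_uIcc).symm

variable [CompleteSpace E]

theorem ae_hasDerivAt (h : IsPrimitiveOn F f a b) :
    ∀ᵐ x, x ∈ uIcc a b → HasDerivAt F (f x) x := by
  filter_upwards [h.intervalIntegrable.ae_hasDerivAt_integral, Measure.ae_ne volume a,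
    Measure.ae_ne volume b] with x hderiv hxa hxb hx
  refine ((hderiv hx a left_mem_uIcc).const_add (F a)).congr_of_eventuallyEq ?_
  have hnhds : uIcc a b ∈ 𝓝 x := by
    refine Icc_mem_nhds (lt_of_le_of_ne hx.1 ?_) (lt_of_le_of_ne hx.2 ?_) <;> grind
  exact eventually_of_mem hnhds h.eq_add_integral

theorem of_ae_hasDerivAt (hF : AbsolutelyContinuousOnInterval F a b)
    (hderiv : ∀ᵐ x, x ∈ uIcc a b → HasDerivAt F (f x) x)
    (hf : IntervalIntegrable f volume a b) : IsPrimitiveOn F f a b := by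
  have hprim := isPrimitiveOn_integral hf
  obtain ⟨C, hC⟩ := (hF.sub hprim.absolutelyContinuousOnInterval).const_of_ae_hasDerivAt_zero <| by
    filter_upwards [hderiv, hprim.ae_hasDerivAt] with x hFx hfx hx
    simpa only [sub_self] using (hFx hx).sub (hfx hx)
  refine ⟨hf, fun x hx ↦ ?_⟩
  have hCx : F x - ∫ t in a..x, f t = F a - 0 := by
    simpa only [Pi.sub_apply, integral_same] using (hC x hx).trans (hC a left_mem_uIcc).symm
  rw [← sub_eq_iff_eq_add, hCx, sub_zero]

theorem of_hasDerivAt (hderiv : ∀ x ∈ uIcc a b, HasDerivAt F (f x) x)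
    (hf : IntervalIntegrable f volume a b) : IsPrimitiveOn F f a b where
  intervalIntegrable := hf
  eq_add_integral x hx := by
    have hsub := uIcc_subset_uIcc_left hx
    rw [integral_eq_sub_of_hasDerivAt (fun t ht ↦ hderiv t (hsub ht)) (hf.mono_set hsub),
      add_sub_cancel]

theorem smul {𝕜 : Type*} [NontriviallyNormedField 𝕜] [NormedAlgebra ℝ 𝕜] [CompleteSpace 𝕜]
    [NormedSpace 𝕜 E] [IsScalarTower ℝ 𝕜 E] {u u' : ℝ → 𝕜} (hu : IsPrimitiveOn u u' a b)
    (hF : IsPrimitiveOn F f a b) :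
    IsPrimitiveOn (fun x ↦ u x • F x) (fun x ↦ u x • f x + u' x • F x) a b := by
  refine of_ae_hasDerivAt (hu.absolutelyContinuousOnInterval.smul hF.absolutelyContinuousOnInterval)
    ?_ ((hF.intervalIntegrable.continuousOn_smul hu.continuousOn).add
      (hu.intervalIntegrable.smul_continuousOn hF.continuousOn))
  filter_upwards [hu.ae_hasDerivAt, hF.ae_hasDerivAt] with x hux hFx hx
  exact (hux hx).smul (hFx hx)

theorem integral_deriv_smul_eq {𝕜 : Type*} [NontriviallyNormedField 𝕜] [NormedAlgebra ℝ 𝕜]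
    [CompleteSpace 𝕜] [NormedSpace 𝕜 E] [IsScalarTower ℝ 𝕜 E] {u u' : ℝ → 𝕜}
    (hu : IsPrimitiveOn u u' a b) (hF : IsPrimitiveOn F f a b) :
    ∫ t in a..b, u' t • F t = u b • F b - u a • F a - ∫ t in a..b, u t • f t := by
  rw [← (hu.smul hF).integral_eq_sub, integral_add
    (hF.intervalIntegrable.continuousOn_smul hu.continuousOn)
    (hu.intervalIntegrable.smul_continuousOn hF.continuousOn), add_sub_cancel_left]

end IsPrimitiveOn

theorem integral_mul_integral_eq_sq_div_two {𝕜 : Type*} [RCLike 𝕜] {f : ℝ → 𝕜}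
    (hf : IntervalIntegrable f volume a b) :
    ∫ t in a..b, f t * ∫ u in a..t, f u = (∫ t in a..b, f t) ^ 2 / 2 := by
  have hF := isPrimitiveOn_integral hf
  have hparts := hF.integral_deriv_smul_eq hF
  simp only [smul_eq_mul, integral_same, mul_zero, sub_zero, mul_comm _ (f _)] at hparts
  linear_combination hparts / 2

end IsPrimitiveOn

section IntegralNorm

variable {E F : Type*} [NormedAddCommGroup E] [NormedSpace ℝ E] [NormedAddCommGroup F] {a b x : ℝ}

theorem uIcc_subset_uIcc_of_mem_Icc (hx : x ∈ Icc a b) : uIcc a x ⊆ uIcc a b :=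
  uIcc_subset_uIcc_left (Icc_subset_uIcc hx)

theorem norm_integral_le_mul_integral_norm {f : ℝ → E} {g : ℝ → F} {C : ℝ}
    (hg : IntervalIntegrable g volume a b) (hx : x ∈ Icc a b) (hC : 0 ≤ C)
    (hfg : ∀ t ∈ Icc a x, ‖f t‖ ≤ C * ‖g t‖) :
    ‖∫ t in a..x, f t‖ ≤ C * ∫ t in a..b, ‖g t‖ := by
  have hgx : IntervalIntegrable g volume a x := hg.mono_set (uIcc_subset_uIcc_of_mem_Icc hx)
  calc ‖∫ t in a..x, f t‖
      ≤ ∫ t in a..x, C * ‖g t‖ := norm_integral_le_of_norm_le hx.1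
        (.of_forall fun t ht ↦ hfg t (Ioc_subset_Icc_self ht)) (hgx.norm.const_mul C)
    _ = C * ∫ t in a..x, ‖g t‖ := integral_const_mul C _
    _ ≤ C * ∫ t in a..b, ‖g t‖ := by
        gcongr
        exact integral_mono_interval le_rfl hx.1 hx.2 (.of_forall fun _ ↦ norm_nonneg _) hg.norm

theorem exists_contDiff_integral_norm_sub_le {f : ℝ → E} (hab : a ≤ b)
    (hf : IntervalIntegrable f volume a b) {ε : ℝ} (hε : 0 < ε) :
    ∃ g : ℝ → E, ContDiff ℝ ∞ g ∧ ∫ t in a..b, ‖f t - g t‖ ≤ ε := by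
  have hf₁ : MemLp f 1 (volume.restrict (Ioc a b)) := memLp_one_iff_integrable.2 hf.1
  obtain ⟨g, hgc, hg, hfg⟩ := hf₁.exist_eLpNorm_sub_le ENNReal.one_ne_top le_rfl hε
  refine ⟨g, hg, ?_⟩
  have hint : Integrable (f - g) (volume.restrict (Ioc a b)) :=
    hf.1.sub (hg.continuous.integrable_of_hasCompactSupport hgc).restrict
  rw [integral_of_le hab, ← ENNReal.ofReal_le_ofReal_iff hε.le]
  calc ENNReal.ofReal (∫ t in Ioc a b, ‖(f - g) t‖)
      = eLpNorm (f - g) 1 (volume.restrict (Ioc a b)) := by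
        rw [ofReal_integral_norm_eq_lintegral_enorm hint, eLpNorm_one_eq_lintegral_enorm]
    _ ≤ ENNReal.ofReal ε := hfg

end IntegralNorm

section Trigonometric

theorem norm_exp_mul_I_le (z : ℂ) : ‖Complex.exp (z * Complex.I)‖ ≤ Real.exp |z.im| := by
  rw [Complex.norm_exp, Complex.mul_I_re]
  exact Real.exp_le_exp.2 (neg_le_abs _)

theorem norm_exp_neg_mul_I_le (z : ℂ) : ‖Complex.exp (-z * Complex.I)‖ ≤ Real.exp |z.im| := by
  simpa only [Complex.neg_im, abs_neg] using norm_exp_mul_I_le (-z)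

theorem norm_sin_le_exp_abs_im (z : ℂ) : ‖Complex.sin z‖ ≤ Real.exp |z.im| := by
  rw [Complex.sin, norm_div, norm_mul, Complex.norm_I, mul_one, Complex.norm_ofNat]
  linarith [norm_sub_le (Complex.exp (-z * Complex.I)) (Complex.exp (z * Complex.I)),
    norm_exp_mul_I_le z, norm_exp_neg_mul_I_le z]

theorem norm_cos_le_exp_abs_im (z : ℂ) : ‖Complex.cos z‖ ≤ Real.exp |z.im| := by
  rw [Complex.cos, norm_div, Complex.norm_ofNat]
  linarith [norm_add_le (Complex.exp (z * Complex.I)) (Complex.exp (-z * Complex.I)),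
    norm_exp_mul_I_le z, norm_exp_neg_mul_I_le z]

end Trigonometric

section LargeFrequency

/-- The regime `k → ∞` in `ℂ`, uniformly in `x ∈ [0, ℓ]`, for functions of `(k, x)`. -/
noncomputable def largeFrequency (ℓ : ℝ) : Filter (ℂ × ℝ) := Bornology.cobounded ℂ ×ˢ 𝓟 (Icc 0 ℓ)

/-- The weight `e^{|Im k| x} / |k|ⁿ` against which functions of `p = (k, x)` are measured. -/
noncomputable def expWeight (n : ℕ) (p : ℂ × ℝ) : ℝ := Real.exp (|p.1.im| * p.2) / ‖p.1‖ ^ n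

variable {ℓ : ℝ} {m n : ℕ} {f : ℂ × ℝ → ℂ}

theorem eventually_largeFrequency_iff {P : ℂ × ℝ → Prop} :
    (∀ᶠ p in largeFrequency ℓ, P p) ↔ ∃ K : ℝ, ∀ k : ℂ, K ≤ ‖k‖ → ∀ x ∈ Icc 0 ℓ, P (k, x) := by
  simp only [largeFrequency, eventually_prod_principal_iff, hasBasis_cobounded_norm.eventually_iff,
    true_and, mem_ofPred_eq]

theorem eventually_largeFrequency_ne_zero_and_mem_Icc :
    ∀ᶠ p in largeFrequency ℓ, p.1 ≠ 0 ∧ p.2 ∈ Icc 0 ℓ :=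
  eventually_largeFrequency_iff.2
    ⟨1, fun _ hk _ hx ↦ ⟨norm_pos_iff.1 (one_pos.trans_le hk), hx⟩⟩

theorem expWeight_nonneg (n : ℕ) (p : ℂ × ℝ) : 0 ≤ expWeight n p := by
  unfold expWeight; positivity

theorem norm_expWeight (n : ℕ) (p : ℂ × ℝ) : ‖expWeight n p‖ = expWeight n p :=
  Real.norm_of_nonneg (expWeight_nonneg n p)

theorem isLittleO_expWeight_succ (n : ℕ) :
    expWeight (n + 1) =o[largeFrequency ℓ] expWeight n := by
  have hinv : (fun p : ℂ × ℝ ↦ ‖p.1‖⁻¹) =o[largeFrequency ℓ] fun _ ↦ (1 : ℝ) :=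
    (isLittleO_one_iff ℝ).2 <|
      (tendsto_inv_atTop_zero.comp tendsto_norm_cobounded_atTop).comp tendsto_fst
  refine ((isBigO_refl (expWeight n) _).mul_isLittleO hinv).congr (fun p ↦ ?_) fun p ↦ mul_one _
  rw [expWeight, expWeight, pow_succ, ← div_div, div_eq_mul_inv (_ / _)]

theorem isLittleO_div_pow (hf : f =o[largeFrequency ℓ] expWeight m) (n : ℕ) :
    (fun p ↦ f p / p.1 ^ n) =o[largeFrequency ℓ] expWeight (m + n) := by
  have hpow : (fun p : ℂ × ℝ ↦ (p.1 ^ n)⁻¹) =O[largeFrequency ℓ] fun p ↦ (‖p.1‖ ^ n)⁻¹ :=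
    .of_bound 1 (.of_forall fun p ↦ by simp)
  refine (hf.mul_isBigO hpow).congr (fun p ↦ (div_eq_mul_inv _ _).symm) fun p ↦ ?_
  rw [expWeight, expWeight, pow_add, ← div_div, div_eq_mul_inv (_ / _)]

end LargeFrequency

section OscIntegral

/-- The oscillatory integral `∫₀ˣ φ(k(2t - x)) f(t) dt` as a function of `p = (k, x)`. It arises
from products of two trigonometric functions of frequency `k` with phases adding up to `kx`. -/
noncomputable def oscIntegral (φ : ℂ → ℂ) (f : ℝ → ℂ) (p : ℂ × ℝ) : ℂ :=
  ∫ t in (0 : ℝ)..p.2, φ (p.1 * (2 * t - p.2)) * f t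

variable {φ ψ : ℂ → ℂ} {f f' : ℝ → ℂ} {k : ℂ} {ℓ x : ℝ}

theorem norm_comp_phase_le (hφ : ∀ z, ‖φ z‖ ≤ Real.exp |z.im|) (k : ℂ) {t : ℝ}
    (ht : t ∈ Icc 0 x) : ‖φ (k * (2 * t - x))‖ ≤ Real.exp (|k.im| * x) := by
  have him : (k * (2 * t - x)).im = k.im * (2 * t - x) := by
    rw [← Complex.im_mul_ofReal]; push_cast; rfl
  refine (hφ _).trans (Real.exp_le_exp.2 ?_)
  rw [him, abs_mul]
  gcongr
  exact abs_le.2 ⟨by linarith [ht.1], by linarith [ht.2]⟩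

theorem intervalIntegrable_comp_phase_mul (hφ : Continuous φ) (k : ℂ)
    (hf : IntervalIntegrable f volume 0 x) :
    IntervalIntegrable (fun t : ℝ ↦ φ (k * (2 * t - x)) * f t) volume 0 x :=
  hf.continuousOn_mul (by fun_prop)

theorem norm_oscIntegral_le (hφ : ∀ z, ‖φ z‖ ≤ Real.exp |z.im|)
    (hf : IntervalIntegrable f volume 0 ℓ) (k : ℂ) (hx : x ∈ Icc 0 ℓ) :
    ‖oscIntegral φ f (k, x)‖ ≤ Real.exp (|k.im| * x) * ∫ t in 0..ℓ, ‖f t‖ := by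
  refine norm_integral_le_mul_integral_norm hf hx (Real.exp_pos _).le fun t ht ↦ ?_
  rw [norm_mul]
  gcongr
  exact norm_comp_phase_le hφ k ht

theorem oscIntegral_sub {g : ℝ → ℂ} (hφ : Continuous φ) (hf : IntervalIntegrable f volume 0 x)
    (hg : IntervalIntegrable g volume 0 x) (k : ℂ) :
    oscIntegral φ (fun t ↦ f t - g t) (k, x) = oscIntegral φ f (k, x) - oscIntegral φ g (k, x) := by
  simpa only [oscIntegral, mul_sub (φ _)] using intervalIntegral.integral_sub
    (intervalIntegrable_comp_phase_mul hφ k hf) (intervalIntegrable_comp_phase_mul hφ k hg)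

theorem oscIntegral_eq_of_isPrimitiveOn (hφ : ∀ z, HasDerivAt φ (ψ z) z) (hψ : Continuous ψ)
    (hf : IsPrimitiveOn f f' 0 x) (hk : k ≠ 0) :
    oscIntegral ψ f (k, x) =
      (φ (k * x) * f x - φ (-(k * x)) * f 0 - oscIntegral φ f' (k, x)) / (2 * k) := by
  have hphase (t : ℝ) : HasDerivAt (fun t : ℝ ↦ k * (2 * t - x)) (k * 2) t := by
    simpa using (((hasDerivAt_id t).ofReal_comp.const_mul (2 : ℂ)).sub_const (x : ℂ)).const_mul k
  have hprim : IsPrimitiveOn (fun t : ℝ ↦ φ (k * (2 * t - x)))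
      (fun t ↦ ψ (k * (2 * t - x)) * (k * 2)) 0 x :=
    .of_hasDerivAt (fun t _ ↦ (hφ _).comp t (hphase t))
      (Continuous.intervalIntegrable (by fun_prop) _ _)
  have hparts := hprim.integral_deriv_smul_eq hf
  have hx : k * (2 * (x : ℂ) - x) = k * x := by ring
  have h0 : k * (2 * ((0 : ℝ) : ℂ) - x) = -(k * x) := by push_cast; ring
  simp only [smul_eq_mul, hx, h0, mul_right_comm _ (k * 2),
    intervalIntegral.integral_mul_const] at hparts
  rw [oscIntegral, oscIntegral, ← hparts, mul_comm k 2,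
    mul_div_cancel_right₀ _ (mul_ne_zero two_ne_zero hk)]

theorem isBigO_oscIntegral_of_isPrimitiveOn (hφ : ∀ z, HasDerivAt φ (ψ z) z) (hψ : Continuous ψ)
    (hφexp : ∀ z, ‖φ z‖ ≤ Real.exp |z.im|) (hf : IsPrimitiveOn f f' 0 ℓ) :
    oscIntegral ψ f =O[largeFrequency ℓ] expWeight 1 := by
  obtain ⟨M, hM⟩ := isCompact_uIcc.exists_bound_of_continuousOn hf.continuousOn
  refine .of_bound ((M + M + ∫ t in 0..ℓ, ‖f' t‖) / 2) ?_
  filter_upwards [eventually_largeFrequency_ne_zero_and_mem_Icc] with p ⟨hk, hx⟩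
  obtain ⟨k, x⟩ := p
  have him : |(k * x).im| = |k.im| * x := by
    rw [Complex.im_mul_ofReal, abs_mul, abs_of_nonneg hx.1]
  have hend : ‖φ (k * x) * f x‖ ≤ Real.exp (|k.im| * x) * M := by
    rw [norm_mul, ← him]
    exact mul_le_mul (hφexp _) (hM x (Icc_subset_uIcc hx)) (norm_nonneg _) (Real.exp_pos _).le
  have hstart : ‖φ (-(k * x)) * f 0‖ ≤ Real.exp (|k.im| * x) * M := by
    rw [norm_mul, ← him, ← abs_neg, ← Complex.neg_im]
    exact mul_le_mul (hφexp _) (hM 0 left_mem_uIcc) (norm_nonneg _) (Real.exp_pos _).le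
  have hsum := norm_sub_le_of_le (norm_sub_le_of_le hend hstart)
    (norm_oscIntegral_le hφexp hf.intervalIntegrable k hx)
  rw [oscIntegral_eq_of_isPrimitiveOn hφ hψ (hf.mono (Icc_subset_uIcc hx)) hk, norm_div, norm_mul,
    Complex.norm_ofNat, norm_expWeight, expWeight, pow_one]
  refine (div_le_div_of_nonneg_right hsum (by positivity)).trans_eq ?_
  have hk' := norm_ne_zero_iff.2 hk
  field_simp

theorem isLittleO_oscIntegral (hφ : ∀ z, HasDerivAt φ (ψ z) z) (hψ : Continuous ψ)
    (hφexp : ∀ z, ‖φ z‖ ≤ Real.exp |z.im|) (hψexp : ∀ z, ‖ψ z‖ ≤ Real.exp |z.im|) (hℓ : 0 ≤ ℓ)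
    (hf : IntervalIntegrable f volume 0 ℓ) :
    oscIntegral ψ f =o[largeFrequency ℓ] expWeight 0 := by
  refine isLittleO_iff.2 fun ε hε ↦ ?_
  obtain ⟨g, hg, hfg⟩ := exists_contDiff_integral_norm_sub_le hℓ hf (half_pos hε)
  have hgprim : IsPrimitiveOn g (deriv g) 0 ℓ :=
    .of_hasDerivAt (fun t _ ↦ (hg.differentiable (by simp) t).hasDerivAt)
      ((hg.continuous_deriv (by simp)).intervalIntegrable _ _)
  have hgint : IntervalIntegrable g volume 0 ℓ := hg.continuous.intervalIntegrable _ _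
  have hgO := (isBigO_oscIntegral_of_isPrimitiveOn hφ hψ hφexp hgprim).trans_isLittleO
    (isLittleO_expWeight_succ 0)
  filter_upwards [hgO.bound (half_pos hε), eventually_largeFrequency_ne_zero_and_mem_Icc]
    with p hgp ⟨_, hx⟩
  obtain ⟨k, x⟩ := p
  have hsub := uIcc_subset_uIcc_of_mem_Icc hx
  have hdiff := norm_oscIntegral_le hψexp (hf.sub hgint) k hx
  rw [oscIntegral_sub hψ (hf.mono_set hsub) (hgint.mono_set hsub)] at hdiff
  simp only [norm_expWeight] at hgp ⊢
  simp only [expWeight, pow_zero, div_one] at hgp ⊢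
  calc ‖oscIntegral ψ f (k, x)‖
      ≤ ‖oscIntegral ψ f (k, x) - oscIntegral ψ g (k, x)‖ + ‖oscIntegral ψ g (k, x)‖ :=
        norm_le_norm_sub_add _ _
    _ ≤ Real.exp (|k.im| * x) * (ε / 2) + ε / 2 * Real.exp (|k.im| * x) :=
        add_le_add (hdiff.trans (by gcongr)) hgp
    _ = ε * Real.exp (|k.im| * x) := by ring

end OscIntegral

section Volterra

/-- The Volterra convolution operator `w ↦ ∫₀ˣ φ(x - t) q(t) w(t) dt` with potential `q`. -/
noncomputable def volterra (φ : ℂ → ℂ) (q w : ℝ → ℂ) (x : ℝ) : ℂ :=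
  ∫ t in (0 : ℝ)..x, φ (x - t) * q t * w t

variable {φ ψ χ τ : ℂ → ℂ} {q w v g : ℝ → ℂ} {κ c m ℓ x : ℝ}

theorem norm_volterra_le (hq : IntervalIntegrable q volume 0 ℓ)
    (hφ : ∀ y ∈ Icc 0 ℓ, ‖φ (y : ℝ)‖ ≤ c * Real.exp (κ * y))
    (hw : ∀ t ∈ Icc 0 ℓ, ‖w t‖ ≤ m * Real.exp (κ * t)) (hx : x ∈ Icc 0 ℓ) :
    ‖volterra φ q w x‖ ≤ c * m * Real.exp (κ * x) * ∫ t in 0..ℓ, ‖q t‖ := by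
  have hℓ : (0 : ℝ) ∈ Icc 0 ℓ := left_mem_Icc.2 (hx.1.trans hx.2)
  have hc : 0 ≤ c := by simpa using (norm_nonneg _).trans (hφ 0 hℓ)
  have hm : 0 ≤ m := by simpa using (norm_nonneg _).trans (hw 0 hℓ)
  refine norm_integral_le_mul_integral_norm hq hx (by positivity) fun t ht ↦ ?_
  calc ‖φ (x - t) * q t * w t‖ = ‖φ (x - t : ℝ)‖ * ‖w t‖ * ‖q t‖ := by
        rw [norm_mul, norm_mul, Complex.ofReal_sub, mul_right_comm]
    _ ≤ c * Real.exp (κ * (x - t)) * (m * Real.exp (κ * t)) * ‖q t‖ := by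
        gcongr
        · exact hφ _ ⟨by linarith [ht.2], by linarith [ht.1, hx.2]⟩
        · exact hw t ⟨ht.1, ht.2.trans hx.2⟩
    _ = c * m * Real.exp (κ * x) * ‖q t‖ := by
        rw [mul_mul_mul_comm, ← Real.exp_add, ← mul_add, sub_add_cancel]

theorem norm_le_of_eq_add_volterra (hq : IntervalIntegrable q volume 0 ℓ)
    (hφ : ∀ y ∈ Icc 0 ℓ, ‖φ (y : ℝ)‖ ≤ c * Real.exp (κ * y)) (hc : c * ∫ t in 0..ℓ, ‖q t‖ ≤ 1 / 2)
    (hw : ContinuousOn w (Icc 0 ℓ)) (hg : ∀ y ∈ Icc 0 ℓ, ‖g y‖ ≤ m * Real.exp (κ * y))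
    (hwg : ∀ y ∈ Icc 0 ℓ, w y = g y + volterra φ q w y) (hx : x ∈ Icc 0 ℓ) :
    ‖w x‖ ≤ 2 * m * Real.exp (κ * x) := by
  obtain ⟨y, hy, hmax⟩ := isCompact_Icc.exists_isMaxOn ⟨x, hx⟩
    (hw.norm.div (f := fun t ↦ ‖w t‖) (g := fun t ↦ Real.exp (κ * t)) (by fun_prop)
      fun _ _ ↦ (Real.exp_pos _).ne')
  set M := ‖w y‖ / Real.exp (κ * y) with hM
  have hwM (t : ℝ) (ht : t ∈ Icc 0 ℓ) : ‖w t‖ ≤ M * Real.exp (κ * t) :=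
    (div_le_iff₀ (Real.exp_pos _)).1 (hmax ht)
  have hMm : M ≤ m + c * M * ∫ t in 0..ℓ, ‖q t‖ := by
    rw [hM, div_le_iff₀ (Real.exp_pos _), ← hM]
    calc ‖w y‖ ≤ ‖g y‖ + ‖volterra φ q w y‖ := (congrArg norm (hwg y hy)).trans_le (norm_add_le _ _)
      _ ≤ m * Real.exp (κ * y) + c * M * Real.exp (κ * y) * ∫ t in 0..ℓ, ‖q t‖ :=
          add_le_add (hg y hy) (norm_volterra_le hq hφ hwM hy)
      _ = (m + c * M * ∫ t in 0..ℓ, ‖q t‖) * Real.exp (κ * y) := by ring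
  have hM0 : 0 ≤ M := by positivity
  have hM2 : M ≤ 2 * m := by nlinarith
  exact (hwM x hx).trans (by gcongr)

section Algebra

theorem intervalIntegrable_volterra (hφ : Continuous φ) (hq : IntervalIntegrable q volume 0 x)
    (hw : ContinuousOn w (Icc 0 x)) (hx : 0 ≤ x) :
    IntervalIntegrable (fun t ↦ φ (x - t) * q t * w t) volume 0 x :=
  (hq.continuousOn_mul (by fun_prop)).mul_continuousOn (by rwa [uIcc_of_le hx])

theorem volterra_sub (hφ : Continuous φ) (hq : IntervalIntegrable q volume 0 x)
    (hw : ContinuousOn w (Icc 0 x)) (hv : ContinuousOn v (Icc 0 x)) (hx : 0 ≤ x) :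
    volterra φ q (fun t ↦ w t - v t) x = volterra φ q w x - volterra φ q v x := by
  simpa only [volterra, mul_sub (φ _ * q _)] using intervalIntegral.integral_sub
    (intervalIntegrable_volterra hφ hq hw hx) (intervalIntegrable_volterra hφ hq hv hx)

theorem volterra_mul_const (φ : ℂ → ℂ) (q w : ℝ → ℂ) (a : ℂ) (x : ℝ) :
    volterra φ q (fun t ↦ w t * a) x = volterra φ q w x * a := by
  simp only [volterra, ← mul_assoc, intervalIntegral.integral_mul_const]

theorem volterra_mul (φ : ℂ → ℂ) (q w v : ℝ → ℂ) (x : ℝ) :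
    volterra φ q (fun t ↦ w t * v t) x = volterra φ (fun t ↦ q t * v t) w x := by
  simp only [volterra, mul_assoc, mul_comm (w _)]

theorem volterra_eq_oscIntegral_add {k a : ℂ} (hχ : Continuous χ)
    (hφψ : ∀ z z', φ z * ψ z' = (χ (k * (z' - z)) + τ (k * (z' + z))) * a)
    (hq : IntervalIntegrable q volume 0 x) :
    volterra φ q (fun t ↦ ψ t) x =
      (oscIntegral χ q (k, x) + τ (k * x) * ∫ t in 0..x, q t) * a := by
  have hintegrand (t : ℝ) : φ (x - t) * q t * ψ t =
      (χ (k * (2 * t - x)) * q t + τ (k * x) * q t) * a := by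
    rw [mul_right_comm, hφψ, add_sub_cancel, sub_sub_eq_add_sub, ← two_mul]
    ring
  simp only [volterra, hintegrand]
  rw [intervalIntegral.integral_mul_const, intervalIntegral.integral_add
    (intervalIntegrable_comp_phase_mul hχ k hq) (hq.const_mul _),
    intervalIntegral.integral_const_mul, oscIntegral]

end Algebra

section Asymptotics

variable {Φ : ℂ → ℂ → ℂ} {W : ℂ → ℝ → ℂ} {i j : ℕ} {C : ℝ}

theorem isBigOWith_volterra (hq : IntervalIntegrable q volume 0 ℓ)
    (hΦ : ∀ k : ℂ, ∀ y : ℝ, 0 ≤ y → ‖Φ k y‖ ≤ expWeight i (k, y))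
    (hW : IsBigOWith C (largeFrequency ℓ) (fun p ↦ W p.1 p.2) (expWeight j)) :
    IsBigOWith (C * ∫ t in 0..ℓ, ‖q t‖) (largeFrequency ℓ)
      (fun p ↦ volterra (Φ p.1) q (W p.1) p.2) (expWeight (i + j)) := by
  obtain ⟨K, hK⟩ := eventually_largeFrequency_iff.1 hW.bound
  refine .of_bound (eventually_largeFrequency_iff.2 ⟨K, fun k hk x hx ↦ ?_⟩)
  have hΦk (y : ℝ) (hy : y ∈ Icc 0 ℓ) : ‖Φ k y‖ ≤ (‖k‖ ^ i)⁻¹ * Real.exp (|k.im| * y) :=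
    (hΦ k y hy.1).trans_eq (div_eq_inv_mul _ _)
  have hWk (t : ℝ) (ht : t ∈ Icc 0 ℓ) : ‖W k t‖ ≤ C * (‖k‖ ^ j)⁻¹ * Real.exp (|k.im| * t) :=
    (hK k hk t ht).trans_eq (by rw [norm_expWeight, expWeight]; ring)
  refine (norm_volterra_le hq hΦk hWk hx).trans_eq ?_
  rw [norm_expWeight, expWeight, pow_add]
  ring

theorem isBigO_volterra (hq : IntervalIntegrable q volume 0 ℓ)
    (hΦ : ∀ k : ℂ, ∀ y : ℝ, 0 ≤ y → ‖Φ k y‖ ≤ expWeight i (k, y))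
    (hW : (fun p : ℂ × ℝ ↦ W p.1 p.2) =O[largeFrequency ℓ] expWeight j) :
    (fun p ↦ volterra (Φ p.1) q (W p.1) p.2) =O[largeFrequency ℓ] expWeight (i + j) := by
  obtain ⟨C, hC⟩ := hW.isBigOWith
  exact (isBigOWith_volterra hq hΦ hC).isBigO

theorem isLittleO_volterra (hℓ : 0 ≤ ℓ) (hq : IntervalIntegrable q volume 0 ℓ)
    (hΦ : ∀ k : ℂ, ∀ y : ℝ, 0 ≤ y → ‖Φ k y‖ ≤ expWeight i (k, y))
    (hW : (fun p : ℂ × ℝ ↦ W p.1 p.2) =o[largeFrequency ℓ] expWeight j) :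
    (fun p ↦ volterra (Φ p.1) q (W p.1) p.2) =o[largeFrequency ℓ] expWeight (i + j) := by
  refine .of_isBigOWith fun ε hε ↦ ?_
  have hI : 0 ≤ ∫ t in 0..ℓ, ‖q t‖ := integral_nonneg hℓ fun _ _ ↦ norm_nonneg _
  have hI' : 0 < (∫ t in 0..ℓ, ‖q t‖) + 1 := by linarith
  refine (isBigOWith_volterra hq hΦ (hW.forall_isBigOWith (div_pos hε hI'))).weaken ?_
  rw [div_mul_eq_mul_div, div_le_iff₀ hI']
  nlinarith

end Asymptotics

end Volterra

section SineSolution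

/-- The sine-type solution `sin(kz)/k` of the free equation, which is also the kernel of the
Volterra equation. -/
noncomputable def freeSine (k z : ℂ) : ℂ := Complex.sin (k * z) / k

/-- `s` is the solution `s(·, k)` on `[0, ℓ]` of the Schrödinger equation with potential `q`
normalized by `s(0) = 0`, `s'(0) = 1`, in its integral form. -/
structure IsSineSolution (ℓ : ℝ) (q : ℝ → ℂ) (k : ℂ) (s : ℝ → ℂ) : Prop where
  continuousOn : ContinuousOn s (Icc 0 ℓ)
  eq_add_volterra : ∀ x ∈ Icc 0 ℓ, s x = freeSine k x + volterra (freeSine k) q s x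

/-- The second iterate `sin(kx)/k - cos(kx)/(2k²) ∫₀ˣ q` of the Volterra equation, without its
oscillatory part. -/
noncomputable def sineApprox (q : ℝ → ℂ) (k : ℂ) (x : ℝ) : ℂ :=
  freeSine k x - Complex.cos (k * x) * (∫ t in 0..x, q t) * (1 / (2 * k ^ 2))

variable {q q' : ℝ → ℂ} {k : ℂ} {ℓ x : ℝ} {s : ℂ → ℝ → ℂ}

theorem continuous_freeSine (k : ℂ) : Continuous (freeSine k) := by
  unfold freeSine; fun_prop

theorem norm_cos_mul_le_expWeight (k : ℂ) {y : ℝ} (hy : 0 ≤ y) :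
    ‖Complex.cos (k * y)‖ ≤ expWeight 0 (k, y) := by
  simpa [expWeight, abs_mul, abs_of_nonneg hy] using norm_cos_le_exp_abs_im (k * y)

theorem norm_freeSine_le_expWeight (k : ℂ) {y : ℝ} (hy : 0 ≤ y) :
    ‖freeSine k y‖ ≤ expWeight 1 (k, y) := by
  rw [freeSine, norm_div, expWeight, pow_one]
  gcongr
  simpa [abs_mul, abs_of_nonneg hy] using norm_sin_le_exp_abs_im (k * y)

theorem isLittleO_oscIntegral_cos (hℓ : 0 ≤ ℓ) (hq : IntervalIntegrable q volume 0 ℓ) :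
    oscIntegral Complex.cos q =o[largeFrequency ℓ] expWeight 0 :=
  isLittleO_oscIntegral Complex.hasDerivAt_sin Complex.continuous_cos norm_sin_le_exp_abs_im
    norm_cos_le_exp_abs_im hℓ hq

theorem oscIntegral_sin_eq (hq : IsPrimitiveOn q q' 0 x) (hk : k ≠ 0) :
    oscIntegral Complex.sin q (k, x) =
      (oscIntegral Complex.cos q' (k, x) - Complex.cos (k * x) * (q x - q 0)) / (2 * k) := by
  have hderiv (z : ℂ) : HasDerivAt (fun z ↦ -Complex.cos z) (Complex.sin z) z := by
    simpa only [neg_neg] using (Complex.hasDerivAt_cos z).fun_neg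
  rw [oscIntegral_eq_of_isPrimitiveOn hderiv Complex.continuous_sin hq hk]
  simp only [oscIntegral, neg_mul, intervalIntegral.integral_neg, Complex.cos_neg]
  ring

theorem volterra_freeSine_freeSine (hq : IntervalIntegrable q volume 0 x) (k : ℂ) :
    volterra (freeSine k) q (fun t ↦ freeSine k t) x =
      (oscIntegral Complex.cos q (k, x) - Complex.cos (k * x) * ∫ t in 0..x, q t)
        * (1 / (2 * k ^ 2)) := by
  rw [volterra_eq_oscIntegral_add (τ := fun z ↦ -Complex.cos z) Complex.continuous_cos
    (fun z z' ↦ ?_) hq, neg_mul, ← sub_eq_add_neg]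
  rw [freeSine, freeSine, mul_sub, mul_add, Complex.cos_sub, Complex.cos_add]
  ring

theorem volterra_cos_freeSine (hq : IntervalIntegrable q volume 0 x) (k : ℂ) :
    volterra (fun z ↦ Complex.cos (k * z)) q (fun t ↦ freeSine k t) x =
      (oscIntegral Complex.sin q (k, x) + Complex.sin (k * x) * ∫ t in 0..x, q t)
        * (1 / (2 * k)) := by
  refine volterra_eq_oscIntegral_add Complex.continuous_sin (fun z z' ↦ ?_) hq
  rw [freeSine, mul_sub, mul_add, Complex.sin_sub, Complex.sin_add]
  ring

theorem volterra_cos_cos (hq : IntervalIntegrable q volume 0 x) (k : ℂ) :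
    volterra (fun z ↦ Complex.cos (k * z)) q (fun t ↦ Complex.cos (k * t)) x =
      (oscIntegral Complex.cos q (k, x) + Complex.cos (k * x) * ∫ t in 0..x, q t) * (1 / 2) := by
  refine volterra_eq_oscIntegral_add (ψ := fun z ↦ Complex.cos (k * z)) Complex.continuous_cos
    (fun z z' ↦ ?_) hq
  rw [mul_sub, mul_add, Complex.cos_sub, Complex.cos_add]
  ring

theorem continuousOn_sineApprox (hq : IntervalIntegrable q volume 0 ℓ) (k : ℂ) :
    ContinuousOn (sineApprox q k) (Icc 0 ℓ) := by
  have hQ : ContinuousOn (fun x ↦ ∫ t in 0..x, q t) (Icc 0 ℓ) :=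
    (isPrimitiveOn_integral hq).continuousOn.mono Icc_subset_uIcc
  have hfree := continuous_freeSine k
  unfold sineApprox
  fun_prop

theorem volterra_cos_sineApprox (hq : IsPrimitiveOn q q' 0 x) (hx : 0 ≤ x) (hk : k ≠ 0) :
    volterra (fun z ↦ Complex.cos (k * z)) q (sineApprox q k) x =
      Complex.sin (k * x) / k * (1 / 2 * ∫ t in 0..x, q t)
        - Complex.cos (k * x) / k ^ 2 * (1 / 4 * (q x - q 0) + 1 / 8 * (∫ t in 0..x, q t) ^ 2)
        + 1 / 4 * ((oscIntegral Complex.cos q' (k, x)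
            - oscIntegral Complex.cos (fun t ↦ q t * ∫ u in 0..t, q u) (k, x)) / k ^ 2) := by
  have hqint : IntervalIntegrable q volume 0 x :=
    hq.continuousOn.intervalIntegrable
  have hQ : ContinuousOn (fun x ↦ ∫ t in 0..x, q t) (uIcc 0 x) :=
    (isPrimitiveOn_integral hqint).continuousOn
  have hfree := continuous_freeSine k
  have hQ' := hQ.mono Icc_subset_uIcc
  unfold sineApprox
  rw [volterra_sub (by fun_prop) hqint (by fun_prop) (by fun_prop) hx, volterra_mul_const,
    volterra_mul, volterra_cos_freeSine hqint, volterra_cos_cos (hqint.mul_continuousOn hQ),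
    integral_mul_integral_eq_sq_div_two hqint, oscIntegral_sin_eq hq hk]
  field_simp
  ring

section Asymptotics

theorem isBigO_sineSolution (hq : IntervalIntegrable q volume 0 ℓ)
    (hs : ∀ k ≠ 0, IsSineSolution ℓ q k (s k)) :
    (fun p : ℂ × ℝ ↦ s p.1 p.2) =O[largeFrequency ℓ] expWeight 1 := by
  refine .of_bound 2 (eventually_largeFrequency_iff.2
    ⟨max 1 (2 * ∫ t in 0..ℓ, ‖q t‖), fun k hk x hx ↦ ?_⟩)
  have hk0 : 0 < ‖k‖ := one_pos.trans_le ((le_max_left _ _).trans hk)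
  have hfree (y : ℝ) (hy : y ∈ Icc 0 ℓ) : ‖freeSine k y‖ ≤ ‖k‖⁻¹ * Real.exp (|k.im| * y) :=
    (norm_freeSine_le_expWeight k hy.1).trans_eq (by rw [expWeight, pow_one, div_eq_inv_mul])
  have hsmall : ‖k‖⁻¹ * ∫ t in 0..ℓ, ‖q t‖ ≤ 1 / 2 := by
    rw [inv_mul_le_iff₀ hk0]
    linarith [(le_max_right _ _).trans hk]
  have hsk := hs k (norm_pos_iff.1 hk0)
  refine (norm_le_of_eq_add_volterra hq hfree hsmall hsk.continuousOn hfree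
    hsk.eq_add_volterra hx).trans_eq ?_
  rw [norm_expWeight, expWeight, pow_one]
  ring

theorem isBigO_sineSolution_sub_freeSine (hq : IntervalIntegrable q volume 0 ℓ)
    (hs : ∀ k ≠ 0, IsSineSolution ℓ q k (s k)) :
    (fun p : ℂ × ℝ ↦ s p.1 p.2 - freeSine p.1 p.2) =O[largeFrequency ℓ] expWeight 2 := by
  refine (isBigO_volterra (Φ := freeSine) hq (fun k _ hy ↦ norm_freeSine_le_expWeight k hy)
    (isBigO_sineSolution hq hs)).congr' ?_ .rfl
  filter_upwards [eventually_largeFrequency_ne_zero_and_mem_Icc] with p ⟨hk, hx⟩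
  rw [(hs p.1 hk).eq_add_volterra p.2 hx, add_sub_cancel_left]

theorem isLittleO_sineSolution_sub_sineApprox (hℓ : 0 ≤ ℓ) (hq : IntervalIntegrable q volume 0 ℓ)
    (hs : ∀ k ≠ 0, IsSineSolution ℓ q k (s k)) :
    (fun p : ℂ × ℝ ↦ s p.1 p.2 - sineApprox q p.1 p.2) =o[largeFrequency ℓ] expWeight 2 := by
  have hiter : (fun p ↦ volterra (freeSine p.1) q (fun t ↦ s p.1 t - freeSine p.1 t) p.2)
      =o[largeFrequency ℓ] expWeight 2 :=
    (isBigO_volterra (W := fun k t ↦ s k t - freeSine k t) hq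
      (fun k _ hy ↦ norm_freeSine_le_expWeight k hy)
      (isBigO_sineSolution_sub_freeSine hq hs)).trans_isLittleO (isLittleO_expWeight_succ 2)
  have hosc := (isLittleO_div_pow (isLittleO_oscIntegral_cos hℓ hq) 2).const_mul_left (1 / 2)
  refine (hiter.add hosc).congr' ?_ .rfl
  filter_upwards [eventually_largeFrequency_ne_zero_and_mem_Icc] with p ⟨hk, hx⟩
  have hqx := hq.mono_set (uIcc_subset_uIcc_of_mem_Icc hx)
  have hfree := continuous_freeSine p.1
  rw [volterra_sub hfree hqx ((hs p.1 hk).continuousOn.mono (Icc_subset_Icc_right hx.2))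
    (by fun_prop) hx.1, volterra_freeSine_freeSine hqx, (hs p.1 hk).eq_add_volterra p.2 hx,
    sineApprox]
  ring

theorem isLittleO_volterra_cos_sineSolution (hℓ : 0 ≤ ℓ) (hq : IsPrimitiveOn q q' 0 ℓ)
    (hs : ∀ k ≠ 0, IsSineSolution ℓ q k (s k)) :
    (fun p : ℂ × ℝ ↦ volterra (fun z ↦ Complex.cos (p.1 * z)) q (s p.1) p.2
        - Complex.sin (p.1 * p.2) / p.1 * (1 / 2 * ∫ t in 0..p.2, q t)
        + Complex.cos (p.1 * p.2) / p.1 ^ 2 *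
            (1 / 4 * (q p.2 - q 0) + 1 / 8 * (∫ t in 0..p.2, q t) ^ 2))
      =o[largeFrequency ℓ] expWeight 2 := by
  have hqint : IntervalIntegrable q volume 0 ℓ := hq.continuousOn.intervalIntegrable
  have hqQ := hqint.mul_continuousOn (isPrimitiveOn_integral hqint).continuousOn
  have hosc : (fun p ↦ 1 / 4 * ((oscIntegral Complex.cos q' p
      - oscIntegral Complex.cos (fun t ↦ q t * ∫ u in 0..t, q u) p) / p.1 ^ 2))
      =o[largeFrequency ℓ] expWeight 2 :=
    (isLittleO_div_pow ((isLittleO_oscIntegral_cos hℓ hq.intervalIntegrable).sub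
      (isLittleO_oscIntegral_cos hℓ hqQ)) 2).const_mul_left (1 / 4)
  have hrest := isLittleO_volterra (Φ := fun k z ↦ Complex.cos (k * z))
    (W := fun k t ↦ s k t - sineApprox q k t) hℓ hqint (fun k _ hy ↦ norm_cos_mul_le_expWeight k hy)
    (isLittleO_sineSolution_sub_sineApprox hℓ hqint hs)
  refine (hrest.add hosc).congr' ?_ .rfl
  filter_upwards [eventually_largeFrequency_ne_zero_and_mem_Icc] with p ⟨hk, hx⟩
  have hsub : Icc 0 p.2 ⊆ Icc 0 ℓ := Icc_subset_Icc_right hx.2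
  rw [volterra_sub (by fun_prop) (hqint.mono_set (uIcc_subset_uIcc_of_mem_Icc hx))
    ((hs p.1 hk).continuousOn.mono hsub) ((continuousOn_sineApprox hqint p.1).mono hsub) hx.1,
    volterra_cos_sineApprox (hq.mono (Icc_subset_uIcc hx)) hx.1 hk]
  ring

end Asymptotics

end SineSolution

theorem gelfand_levitan_s_deriv_asymptotics_general
    {ℓ : ℝ} (hℓ : 0 ≤ ℓ) {q q' : ℝ → ℂ} (hq : IsPrimitiveOn q q' 0 ℓ) {s sderiv : ℂ → ℝ → ℂ}
    (hs : ∀ k ≠ 0, IsSineSolution ℓ q k (s k))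
    (hsderiv : ∀ k ≠ 0, ∀ x ∈ Icc (0 : ℝ) ℓ,
      sderiv k x = Complex.cos (k * x) + volterra (fun z ↦ Complex.cos (k * z)) q (s k) x) :
    ∀ ε > 0, ∃ K > 0, ∀ k : ℂ, K ≤ ‖k‖ → ∀ x ∈ Icc (0 : ℝ) ℓ,
      ‖sderiv k x - Complex.cos (k * x)
          - (Complex.sin (k * x) / k) * ((1 / 2 : ℂ) * ∫ t in (0 : ℝ)..x, q t)
          + (Complex.cos (k * x) / k ^ 2) *
              ((1 / 4 : ℂ) * (q x - q 0) + (1 / 8 : ℂ) * (∫ t in (0 : ℝ)..x, q t) ^ 2)‖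
        ≤ ε * Real.exp (|k.im| * x) / ‖k‖ ^ 2 := by
  intro ε hε
  obtain ⟨K, hK⟩ := eventually_largeFrequency_iff.1
    ((isLittleO_volterra_cos_sineSolution hℓ hq hs).bound hε)
  refine ⟨max K 1, lt_max_of_lt_right one_pos, fun k hk x hx ↦ ?_⟩
  have hk0 : k ≠ 0 := norm_pos_iff.1 (one_pos.trans_le ((le_max_right K 1).trans hk))
  rw [hsderiv k hk0 x hx, add_sub_cancel_left, mul_div_assoc]
  exact (hK k ((le_max_left K 1).trans hk) x hx).trans_eq (by rw [norm_expWeight, expWeight])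

/-- Asymptotics of the derivative `s'(·, k)` of the solution `s(·, k)` of the
Volterra integral equation `s(x,k) = sin(kx)/k + ∫₀ˣ (sin(k(x−t))/k) q(t) s(t,k) dt` on `[0, ℓ]`,
where `s'(x,k) = cos(kx) + ∫₀ˣ cos(k(x−t)) q(t) s(t,k) dt` and the potential `q` is
absolutely continuous with derivative `q' ∈ L¹((0,ℓ))`. -/
theorem gelfand_levitan_s_deriv_asymptotics
    (ℓ : ℝ) (hℓ : 0 < ℓ) (q q' : ℝ → ℝ)
    (hq' : IntervalIntegrable q' volume 0 ℓ)
    (hq : ∀ x ∈ Set.Icc (0 : ℝ) ℓ, q x = q 0 + ∫ t in (0 : ℝ)..x, q' t)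
    (s sderiv : ℂ → ℝ → ℂ)
    (hscont : ∀ k : ℂ, k ≠ 0 → ContinuousOn (s k) (Set.Icc 0 ℓ))
    (hs : ∀ k : ℂ, k ≠ 0 → ∀ x ∈ Set.Icc (0 : ℝ) ℓ,
      s k x = Complex.sin (k * x) / k +
        ∫ t in (0 : ℝ)..x, (Complex.sin (k * ((x : ℂ) - t)) / k) * (q t : ℂ) * s k t)
    (hsderiv : ∀ k : ℂ, k ≠ 0 → ∀ x ∈ Set.Icc (0 : ℝ) ℓ,
      sderiv k x = Complex.cos (k * x) +
        ∫ t in (0 : ℝ)..x, Complex.cos (k * ((x : ℂ) - t)) * (q t : ℂ) * s k t) :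
    ∀ ε > 0, ∃ K > 0, ∀ k : ℂ, K ≤ ‖k‖ → ∀ x ∈ Set.Icc (0 : ℝ) ℓ,
      ‖sderiv k x - Complex.cos (k * x)
          - (Complex.sin (k * x) / k) * ((1 / 2 : ℂ) * ∫ t in (0 : ℝ)..x, (q t : ℂ))
          + (Complex.cos (k * x) / k ^ 2) *
              ((1 / 4 : ℂ) * ((q x : ℂ) - (q 0 : ℂ))
                + (1 / 8 : ℂ) * (∫ t in (0 : ℝ)..x, (q t : ℂ)) ^ 2)‖
        ≤ ε * Real.exp (|k.im| * x) / ‖k‖ ^ 2 :=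
  gelfand_levitan_s_deriv_asymptotics_general hℓ.le
    (q := fun t ↦ q t) (q' := fun t ↦ q' t) ⟨⟨hq'.1.ofReal, hq'.2.ofReal⟩, fun x hx ↦ by
      rw [hq x (uIcc_of_le hℓ.le ▸ hx), Complex.ofReal_add, intervalIntegral.integral_ofReal]⟩
    (fun k hk ↦ ⟨hscont k hk, hs k hk⟩) hsderiv
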